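/- arXiv:math/0502395 — 2 statements merged into one kernel-verified Lean document; each statement's English description precedes it below -/
import Mathlib

section
/- For all real numbers r₀ and θ, the function R ↦ (sinh(r₀ + R)·θ + 4R)/sinh(R) tends to e^{r₀}·θ as R → ∞. -/
open Real Filter

open scoped Topology Asymptotics

theorem isEquivalent_sinh_atTop : sinh ~[atTop] fun x => exp x / 2 := by
  have exp_neg_isLittleO_exp : (fun x : ℝ => exp (-x)) =o[atTop] exp := by
    refine isLittleO_exp_comp_exp_comp.2 ?_
    simpa only [sub_neg_eq_add, id] using tendsto_id.atTop_add_atTop tendsto_id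
  have sinh_sub_exp_half : (sinh - fun x => exp x / 2) = fun x => -(1 / 2) * exp (-x) := by
    funext x
    rw [Pi.sub_apply, sinh_eq]
    ring
  have exp_isBigO_exp_half : exp =O[atTop] fun x => exp x / 2 := by
    simpa only [div_eq_inv_mul] using
      (Asymptotics.isBigO_refl exp atTop).const_mul_right (inv_ne_zero two_ne_zero)
  rw [Asymptotics.IsEquivalent, sinh_sub_exp_half]
  exact (exp_neg_isLittleO_exp.const_mul_left _).trans_isBigO exp_isBigO_exp_half

theorem isLittleO_pow_sinh_atTop (n : ℕ) : (fun x : ℝ => x ^ n) =o[atTop] sinh := by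
  have pow_isLittleO_exp_half : (fun x : ℝ => x ^ n) =o[atTop] fun x => exp x / 2 := by
    simpa only [div_eq_inv_mul] using
      (isLittleO_pow_exp_atTop (n := n)).const_mul_right (inv_ne_zero two_ne_zero)
  exact pow_isLittleO_exp_half.trans_isBigO isEquivalent_sinh_atTop.isBigO_symm

theorem tendsto_sinh_const_add_div_sinh_atTop (a : ℝ) :
    Tendsto (fun x => sinh (a + x) / sinh x) atTop (𝓝 (exp a)) := by
  have numerator : (fun x => sinh (a + x)) ~[atTop] fun x => exp (a + x) / 2 :=
    isEquivalent_sinh_atTop.comp_tendsto (tendsto_atTop_add_const_left atTop a tendsto_id)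
  have exp_ratio : (fun x => exp (a + x) / 2 / (exp x / 2)) = fun _ => exp a := by
    funext x
    rw [div_div_div_cancel_right₀ two_ne_zero, ← exp_sub, add_sub_cancel_right]
  have ratio : (fun x => sinh (a + x) / sinh x) ~[atTop] fun _ => exp a :=
    exp_ratio ▸ numerator.div isEquivalent_sinh_atTop
  exact ratio.tendsto_const

/-- For all real numbers `r₀` and `θ`, the function
`R ↦ (sinh(r₀ + R)·θ + 4R)/sinh(R)` tends to `e^{r₀}·θ` as `R → ∞`. -/
theorem sinh_ratio_tendsto_exp_mul (r₀ θ : ℝ) :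
    Tendsto (fun R : ℝ => (Real.sinh (r₀ + R) * θ + 4 * R) / Real.sinh R)
      atTop (nhds (Real.exp r₀ * θ)) := by
  have linear_term : Tendsto (fun R : ℝ => R / sinh R) atTop (𝓝 0) := by
    simpa only [pow_one] using (isLittleO_pow_sinh_atTop 1).tendsto_div_nhds_zero
  have sum_of_terms : Tendsto (fun R => sinh (r₀ + R) / sinh R * θ + 4 * (R / sinh R))
      atTop (𝓝 (exp r₀ * θ + 4 * 0)) :=
    ((tendsto_sinh_const_add_div_sinh_atTop r₀).mul_const θ).add (linear_term.const_mul 4)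
  rw [mul_zero, add_zero] at sum_of_terms
  refine sum_of_terms.congr fun R => ?_
  ring
end

section
/- Let G be a group acting on a set Ω, ι an index type, γ : ι → G, and U⁺, U⁻ : ι → Set Ω, such that: (i) for every i, γ_i · U_i⁺ ⊆ U_i⁺ and γ_i⁻¹ · U_i⁻ ⊆ U_i⁻; (ii) for all i ≠ j, γ_j · (U_i⁺ ∪ U_i⁻) ⊆ U_j⁺ and γ_j⁻¹ · (U_i⁺ ∪ U_i⁻) ⊆ U_j⁻. Let k ≥ 1, let s₀, …, s_{k−1} ∈ ι with s_ℓ ≠ s_{ℓ+1} for each 0 ≤ ℓ < k−1, let t₀, …, t_{k−1} be nonzero integers, and set w = γ_{s₀}^{t₀} · γ_{s₁}^{t₁} ⋯ γ_{s_{k−1}}^{t_{k−1}}. Then for every j ∈ ι with j ≠ s_{k−1}: w · (U_j⁺ ∪ U_j⁻) ⊆ U_{s₀}⁺ if t₀ > 0, and w · (U_j⁺ ∪ U_j⁻) ⊆ U_{s₀}⁻ if t₀ < 0. -/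
open Pointwise

/-!
Write `U i = Uplus i ∪ Uminus i`. Every nonzero power of `γ i` maps `U j`, for `j ≠ i`, into `U i`,
landing in `Uplus i` or `Uminus i` according to the sign of the exponent. Appending `j` to the
indices `s₀, …, s_{k-1}` of the word keeps neighbours distinct, so the letters of the word after the
first carry `U j` through the successive `U (s ℓ)` into the set attached to the second entry of the
extended sequence; the first letter is then a power of `γ s₀` applied to a set `U i` with `i ≠ s₀`.
-/

theorem pow_smul_subset_of_smul_subset {M Ω : Type*} [Monoid M] [MulAction M Ω] {g : M}
    {A B : Set Ω} (hA : g • A ⊆ B) (hB : g • B ⊆ B) {n : ℕ} (hn : n ≠ 0) : g ^ n • A ⊆ B := by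
  obtain ⟨m, rfl⟩ := Nat.exists_eq_succ_of_ne_zero hn
  clear hn
  induction m with
  | zero => rwa [pow_one]
  | succ m ih =>
    rw [pow_succ', mul_smul]
    exact (Set.smul_set_mono ih).trans hB

theorem prod_ofFn_smul_subset {M Ω : Type*} [Monoid M] [MulAction M Ω] {n : ℕ} {g : Fin n → M}
    {A : Fin (n + 1) → Set Ω} (h : ∀ ℓ, g ℓ • A ℓ.succ ⊆ A ℓ.castSucc) :
    (List.ofFn g).prod • A (Fin.last n) ⊆ A 0 := by
  induction n with
  | zero => simp
  | succ n ih =>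
    have tail_subset : (List.ofFn fun ℓ : Fin n => g ℓ.succ).prod • A (Fin.last (n + 1)) ⊆ A 1 :=
      ih (A := fun ℓ => A ℓ.succ) fun ℓ => h ℓ.succ
    rw [List.ofFn_succ, List.prod_cons, mul_smul]
    exact (Set.smul_set_mono tail_subset).trans (h 0)

theorem forall_snoc_castSucc_succ_iff {α : Type*} {r : α → α → Prop} {n : ℕ}
    {s : Fin (n + 1) → α} {a : α} :
    (∀ ℓ : Fin (n + 1), r (Fin.snoc (α := fun _ => α) s a ℓ.castSucc)
        (Fin.snoc (α := fun _ => α) s a ℓ.succ)) ↔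
      (∀ ℓ : Fin n, r (s ℓ.castSucc) (s ℓ.succ)) ∧ r (s (Fin.last n)) a := by
  simp only [Fin.forall_fin_succ', Fin.succ_castSucc, Fin.succ_last, Fin.snoc_castSucc,
    Fin.snoc_last]

/-- A ping-pong configuration: `P i` and `N i` play the roles of the neighbourhoods `U_i⁺` and
`U_i⁻` of the attracting and the repelling end of `γ i`. The sets are not required to be disjoint
or nonempty. -/
structure IsPingPong {G Ω ι : Type*} [Group G] [MulAction G Ω] (γ : ι → G) (P N : ι → Set Ω) :
    Prop where
  smul_subset (i : ι) : γ i • P i ⊆ P i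
  inv_smul_subset (i : ι) : (γ i)⁻¹ • N i ⊆ N i
  smul_union_subset {i j : ι} (hij : i ≠ j) : γ j • (P i ∪ N i) ⊆ P j
  inv_smul_union_subset {i j : ι} (hij : i ≠ j) : (γ j)⁻¹ • (P i ∪ N i) ⊆ N j

namespace IsPingPong

variable {G Ω ι : Type*} [Group G] [MulAction G Ω] {γ : ι → G} {P N : ι → Set Ω} {i j : ι} {e : ℤ}

theorem inv (h : IsPingPong γ P N) : IsPingPong γ⁻¹ N P where
  smul_subset := h.inv_smul_subset
  inv_smul_subset i := by simpa only [Pi.inv_apply, inv_inv] using h.smul_subset i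
  smul_union_subset hij := by
    simpa only [Pi.inv_apply, Set.union_comm] using h.inv_smul_union_subset hij
  inv_smul_union_subset hij := by
    simpa only [Pi.inv_apply, inv_inv, Set.union_comm] using h.smul_union_subset hij

theorem zpow_smul_union_subset_of_pos (h : IsPingPong γ P N) (hij : i ≠ j) (he : 0 < e) :
    γ j ^ e • (P i ∪ N i) ⊆ P j := by
  lift e to ℕ using he.le
  rw [zpow_natCast]
  exact pow_smul_subset_of_smul_subset (h.smul_union_subset hij) (h.smul_subset j)
    (Int.natCast_pos.mp he).ne'

theorem zpow_smul_union_subset_of_neg (h : IsPingPong γ P N) (hij : i ≠ j) (he : e < 0) :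
    γ j ^ e • (P i ∪ N i) ⊆ N j := by
  simpa only [Pi.inv_apply, inv_zpow', neg_neg, Set.union_comm] using
    h.inv.zpow_smul_union_subset_of_pos hij (neg_pos.mpr he)

theorem zpow_smul_union_subset_union (h : IsPingPong γ P N) (hij : i ≠ j) (he : e ≠ 0) :
    γ j ^ e • (P i ∪ N i) ⊆ P j ∪ N j := by
  rcases he.lt_or_gt with he | he
  · exact Set.subset_union_of_subset_right (h.zpow_smul_union_subset_of_neg hij he) _
  · exact Set.subset_union_of_subset_left (h.zpow_smul_union_subset_of_pos hij he) _

theorem word_smul_union_subset_union (h : IsPingPong γ P N) {n : ℕ} {s : Fin (n + 1) → ι}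
    {t : Fin n → ℤ} (hs : ∀ ℓ : Fin n, s ℓ.castSucc ≠ s ℓ.succ) (ht : ∀ ℓ, t ℓ ≠ 0) :
    (List.ofFn fun ℓ => γ (s ℓ.castSucc) ^ t ℓ).prod • (P (s (Fin.last n)) ∪ N (s (Fin.last n))) ⊆
      P (s 0) ∪ N (s 0) :=
  prod_ofFn_smul_subset (A := fun ℓ => P (s ℓ) ∪ N (s ℓ)) fun ℓ =>
    h.zpow_smul_union_subset_union (hs ℓ).symm (ht ℓ)

theorem word_smul_union_subset_of_pos (h : IsPingPong γ P N) {n : ℕ} {s : Fin (n + 2) → ι}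
    {t : Fin (n + 1) → ℤ} (hs : ∀ ℓ : Fin (n + 1), s ℓ.castSucc ≠ s ℓ.succ)
    (ht : ∀ ℓ : Fin n, t ℓ.succ ≠ 0) (ht₀ : 0 < t 0) :
    (List.ofFn fun ℓ => γ (s ℓ.castSucc) ^ t ℓ).prod •
      (P (s (Fin.last (n + 1))) ∪ N (s (Fin.last (n + 1)))) ⊆ P (s 0) := by
  rw [List.ofFn_succ, List.prod_cons, mul_smul]
  have tail_subset :=
    h.word_smul_union_subset_union (s := fun ℓ => s ℓ.succ) (fun ℓ => hs ℓ.succ) ht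
  exact (Set.smul_set_mono tail_subset).trans (h.zpow_smul_union_subset_of_pos (hs 0).symm ht₀)

theorem word_smul_union_subset_of_neg (h : IsPingPong γ P N) {n : ℕ} {s : Fin (n + 2) → ι}
    {t : Fin (n + 1) → ℤ} (hs : ∀ ℓ : Fin (n + 1), s ℓ.castSucc ≠ s ℓ.succ)
    (ht : ∀ ℓ : Fin n, t ℓ.succ ≠ 0) (ht₀ : t 0 < 0) :
    (List.ofFn fun ℓ => γ (s ℓ.castSucc) ^ t ℓ).prod •
      (P (s (Fin.last (n + 1))) ∪ N (s (Fin.last (n + 1)))) ⊆ N (s 0) := by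
  simpa only [Pi.inv_apply, Pi.neg_apply, inv_zpow', neg_neg, Set.union_comm] using
    h.inv.word_smul_union_subset_of_pos (t := -t) hs (fun ℓ => neg_ne_zero.mpr (ht ℓ))
      (neg_pos.mpr ht₀)

end IsPingPong

/-- Ping-pong for words in normal form: under the ping-pong configuration, a word
`w = γ_{s₀}^{t₀} ⋯ γ_{s_{k−1}}^{t_{k−1}}` with all exponents nonzero and consecutive
indices distinct moves `U⁺ j ∪ U⁻ j` (for `j ≠ s_{k−1}`) into `U⁺ s₀` if `t₀ > 0`,
and into `U⁻ s₀` if `t₀ < 0`. -/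
theorem pingpong_word_normal_form {G Ω ι : Type*} [Group G] [MulAction G Ω]
    (γ : ι → G) (Uplus Uminus : ι → Set Ω)
    (h1 : ∀ i, γ i • Uplus i ⊆ Uplus i ∧ (γ i)⁻¹ • Uminus i ⊆ Uminus i)
    (h2 : ∀ i j, i ≠ j →
      γ j • (Uplus i ∪ Uminus i) ⊆ Uplus j ∧
      (γ j)⁻¹ • (Uplus i ∪ Uminus i) ⊆ Uminus j)
    (k : ℕ) (hk : 1 ≤ k) (s : Fin k → ι) (t : Fin k → ℤ)
    (hs : ∀ (ℓ : ℕ) (h : ℓ + 1 < k), s ⟨ℓ, by omega⟩ ≠ s ⟨ℓ + 1, h⟩)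
    (ht : ∀ ℓ, t ℓ ≠ 0)
    (w : G) (hw : w = (List.ofFn fun ℓ => γ (s ℓ) ^ t ℓ).prod)
    (j : ι) (hj : j ≠ s ⟨k - 1, by omega⟩) :
    (0 < t ⟨0, by omega⟩ →
      w • (Uplus j ∪ Uminus j) ⊆ Uplus (s ⟨0, by omega⟩)) ∧
    (t ⟨0, by omega⟩ < 0 →
      w • (Uplus j ∪ Uminus j) ⊆ Uminus (s ⟨0, by omega⟩)) := by
  subst hw
  obtain ⟨n, rfl⟩ : ∃ n, k = n + 1 := Nat.exists_eq_add_of_le' hk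
  have hγ : IsPingPong γ Uplus Uminus :=
    ⟨fun i => (h1 i).1, fun i => (h1 i).2, fun hij => (h2 _ _ hij).1, fun hij => (h2 _ _ hij).2⟩
  let σ : Fin (n + 2) → ι := Fin.snoc s j
  have hσ : ∀ ℓ : Fin (n + 1), σ ℓ.castSucc ≠ σ ℓ.succ :=
    forall_snoc_castSucc_succ_iff.mpr ⟨fun ℓ => hs ℓ (by omega), hj.symm⟩
  have hσ_castSucc (ℓ : Fin (n + 1)) : σ ℓ.castSucc = s ℓ := Fin.snoc_castSucc ..
  have hσ_zero : σ 0 = s ⟨0, hk⟩ := hσ_castSucc 0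
  have hσ_last : σ (Fin.last (n + 1)) = j := Fin.snoc_last ..
  have ht_succ (ℓ : Fin n) : t ℓ.succ ≠ 0 := ht ℓ.succ
  constructor <;> intro ht₀
  · simpa only [hσ_castSucc, hσ_zero, hσ_last] using
      hγ.word_smul_union_subset_of_pos hσ ht_succ ht₀
  · simpa only [hσ_castSucc, hσ_zero, hσ_last] using
      hγ.word_smul_union_subset_of_neg hσ ht_succ ht₀
end
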